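/- For every λ ∈ (0,1) (equivalently every σ := √(1−λ) ∈ (0,1)), one has |w₂⁻(5/2)| < 1/2 and |(w₂⁻)'(5/2)| < 1/5, where (w₂⁻)' denotes the derivative in r. -/

import Mathlib

/-!
The function `g30` is `g3` at `σ = 1`, so `w₂⁻` is a difference quotient of `σ ↦ g3 σ r` between
`σ` and `1`, with `1 - σ ^ 2` in the denominator. Put `p x = x e^x E(x)` (`scaledE`) and
`q σ = (p (5 + 5σ) - p 5) / σ`. At `r = 5/2`, with `ε = a₁ e⁻⁵ ≤ 1/20`,

* `g3 σ r = e^{-σr} / r * (1 - ε q / 5)`,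
* `∂_r g3 σ r = -e^{-σr} / r² * (1 + σr - ε (1 - (p 5 + p (5 + 5σ)) / 2 + q / 5))`.

The elementary bounds `e^{-x}/(x+1) ≤ E(x) ≤ e^{-x}/x` give `0 ≤ p' ≤ 1/x`, hence `q` and the
bracket multiplying `ε` are at most `1` in absolute value and differ from their values at `σ = 1` by
at most `1 - σ`. The `ε`-terms therefore contribute at most a
small multiple of `1 - σ`. What remains are the explicit quotients `(e^{-σr} - e^{-r}) / (1 - σ²)`
and `((1 + σr) e^{-σr} - (1 + r) e^{-r}) / (1 - σ²)`. The first is at most `1` by convexity of `exp`;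
the second is bounded separately on `σ ≤ 1/2` and on `σ ≥ 1/2` (`w2m_deriv_arith`).
-/

open Real Set Filter MeasureTheory

/-- `E x = ∫_x^∞ e^{-t}/t dt`, so that `Ei(-x) = -E x` for `x > 0`. -/
noncomputable def expInt (x : ℝ) : ℝ := ∫ t in Set.Ioi x, Real.exp (-t) / t

/-- `g(r) = r⁻¹ (e^{-r} E(2r) - 2 e^{r} E(4r))`. -/
noncomputable def gfun (r : ℝ) : ℝ :=
  r⁻¹ * (Real.exp (-r) * expInt (2 * r) - 2 * Real.exp r * expInt (4 * r))

/-- `a₁ = (6839/2521)²`. -/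
noncomputable def a1 : ℝ := (6839 / 2521) ^ 2

/-- `g₃(r) = (σr)⁻¹ e^{-σr} (σ + a₁ E(2r) - a₁ e^{2σr} (1+σ) E(2(1+σ)r))`. -/
noncomputable def g3 (σ r : ℝ) : ℝ :=
  (σ * r)⁻¹ * Real.exp (-σ * r) *
    (σ + a1 * expInt (2 * r)
      - a1 * Real.exp (2 * σ * r) * (1 + σ) * expInt (2 * (1 + σ) * r))

/-- `g₃₀(r) = e^{-r}/r + a₁ g(r)` (the value of `g₃` at `λ = 0`). -/
noncomputable def g30 (r : ℝ) : ℝ := Real.exp (-r) / r + a1 * gfun r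

/-- `w₂⁻(r) = λ⁻¹ (g₃(r) - g₃₀(r))` with `σ = √(1-λ)`. -/
noncomputable def w2m (lam r : ℝ) : ℝ :=
  lam⁻¹ * (g3 (Real.sqrt (1 - lam)) r - g30 r)

/-! ### The exponential integral -/

lemma expInt_integrableOn {x : ℝ} (hx : 0 < x) :
    IntegrableOn (fun t : ℝ => Real.exp (-t) / t) (Set.Ioi x) := by
  have h1 : IntegrableOn (fun t : ℝ => Real.exp (-t) / x) (Set.Ioi x) :=
    (integrableOn_exp_neg_Ioi x).div_const x
  have hmeas : Measurable (fun t : ℝ => Real.exp (-t) / t) := by fun_prop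
  refine Integrable.mono' h1 hmeas.aestronglyMeasurable ?_
  filter_upwards [self_mem_ae_restrict measurableSet_Ioi] with t ht
  have ht : x < t := ht
  have : 0 < t := hx.trans ht
  rw [Real.norm_of_nonneg (by positivity)]
  gcongr

lemma expInt_le {x : ℝ} (hx : 0 < x) : expInt x ≤ Real.exp (-x) / x := by
  have h1 : IntegrableOn (fun t : ℝ => Real.exp (-t) / x) (Set.Ioi x) :=
    (integrableOn_exp_neg_Ioi x).div_const x
  calc expInt x ≤ ∫ t in Set.Ioi x, Real.exp (-t) / x := by
        refine setIntegral_mono_on (expInt_integrableOn hx) h1 measurableSet_Ioi ?_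
        intro t ht
        have ht : x < t := ht
        gcongr
    _ = Real.exp (-x) / x := by rw [integral_div, integral_exp_neg_Ioi]

/-- `e^{-x}/(x+1)` is the integral over `(x, ∞)` of `e^{-t}(t+2)/(t+1)²`, which is at most
`e^{-t}/t`. -/
lemma le_expInt {x : ℝ} (hx : 0 < x) : Real.exp (-x) / (x + 1) ≤ expInt x := by
  have hd : ∀ t ∈ Set.Ici x, HasDerivAt (fun t : ℝ => -(Real.exp (-t) / (t + 1)))
      (Real.exp (-t) * ((t + 2) / (t + 1) ^ 2)) t := by
    intro t ht
    have ht : x ≤ t := ht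
    have h0 : t + 1 ≠ 0 := by linarith
    have := (((hasDerivAt_neg t).exp).div ((hasDerivAt_id t).add_const 1) h0).neg
    refine this.congr_deriv ?_
    simp only [id]
    field_simp
    ring
  have hlim : Tendsto (fun t : ℝ => -(Real.exp (-t) / (t + 1))) atTop (nhds 0) := by
    have h1 : Tendsto (fun t : ℝ => Real.exp (-t)) atTop (nhds 0) :=
      Real.tendsto_exp_neg_atTop_nhds_zero
    have := (h1.div_atTop (tendsto_atTop_add_const_right _ (1:ℝ) tendsto_id)).neg
    simpa using this
  have hnn : ∀ t ∈ Set.Ioi x, 0 ≤ Real.exp (-t) * ((t + 2) / (t + 1) ^ 2) := by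
    intro t ht
    have : 0 < t := hx.trans ht
    positivity
  have hint := integrableOn_Ioi_deriv_of_nonneg' hd hnn hlim
  have hval := integral_Ioi_of_hasDerivAt_of_nonneg' hd hnn hlim
  calc Real.exp (-x) / (x + 1) = ∫ t in Set.Ioi x, Real.exp (-t) * ((t + 2) / (t + 1) ^ 2) := by
        rw [hval]; ring
    _ ≤ expInt x := by
        refine setIntegral_mono_on hint (expInt_integrableOn hx) measurableSet_Ioi ?_
        intro t ht
        have : 0 < t := hx.trans ht
        rw [div_eq_mul_inv (Real.exp (-t)) t]
        refine mul_le_mul_of_nonneg_left ?_ (Real.exp_pos _).le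
        rw [inv_eq_one_div, div_le_div_iff₀ (by positivity) this]
        nlinarith

lemma expInt_hasDerivAt {x : ℝ} (hx : 0 < x) :
    HasDerivAt expInt (-(Real.exp (-x) / x)) x := by
  have hx2 : 0 < x / 2 := by linarith
  have hcont : ContinuousOn (fun t : ℝ => Real.exp (-t) / t) (Set.Ioi 0) := by
    refine ContinuousOn.div (by fun_prop) continuousOn_id ?_
    intro t ht
    exact (ne_of_gt ht)
  have hii : IntervalIntegrable (fun t : ℝ => Real.exp (-t) / t) volume (x / 2) x := by
    rw [intervalIntegrable_iff_integrableOn_Ioc_of_le (by linarith)]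
    exact (expInt_integrableOn hx2).mono_set Set.Ioc_subset_Ioi_self
  have h1 : HasDerivAt (fun u => ∫ t in (x / 2)..u, Real.exp (-t) / t) (Real.exp (-x) / x) x :=
    intervalIntegral.integral_hasDerivAt_right hii
      (hcont.stronglyMeasurableAtFilter isOpen_Ioi x hx)
      (hcont.continuousAt (Ioi_mem_nhds hx))
  refine (h1.const_sub (expInt (x / 2))).congr_of_eventuallyEq ?_
  filter_upwards [Ioi_mem_nhds (show x / 2 < x by linarith)] with u hu
  have hu : x / 2 < u := hu
  have := intervalIntegral.integral_Ioi_sub_Ioi (expInt_integrableOn hx2) hu.le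
  simp only [expInt]
  linarith

/-! ### The scaled exponential integral -/

/-- The scaled exponential integral `p x = x e^x E(x)`, which is increasing and tends to `1` as
`x → ∞`. -/
noncomputable def scaledE (x : ℝ) : ℝ := x * Real.exp x * expInt x

lemma expInt_eq {x : ℝ} (hx : 0 < x) : expInt x = Real.exp (-x) / x * scaledE x := by
  rw [scaledE, Real.exp_neg]
  field_simp

lemma scaledE_le_one {x : ℝ} (hx : 0 < x) : scaledE x ≤ 1 := by
  have h := expInt_le hx
  rw [expInt_eq hx] at h
  have h0 : 0 < Real.exp (-x) / x := by positivity
  exact le_of_mul_le_mul_left (by linarith) h0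

lemma le_scaledE {x : ℝ} (hx : 0 < x) : x / (x + 1) ≤ scaledE x := by
  have h := le_expInt hx
  rw [expInt_eq hx] at h
  have h0 : 0 < Real.exp (-x) / x := by positivity
  refine le_of_mul_le_mul_left (le_trans (le_of_eq ?_) h) h0
  field_simp

lemma scaledE_hasDerivAt {x : ℝ} (hx : 0 < x) :
    HasDerivAt scaledE (scaledE x * (1 + 1 / x) - 1) x := by
  have h := ((hasDerivAt_id x).mul (Real.hasDerivAt_exp x)).mul (expInt_hasDerivAt hx)
  refine h.congr_deriv ?_
  simp only [scaledE, id, Pi.mul_apply, Real.exp_neg]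
  field_simp
  ring

lemma scaledE_mono {x y : ℝ} (hx : 0 < x) (hxy : x ≤ y) : scaledE x ≤ scaledE y := by
  have hpos : ∀ t ∈ Set.Ici x, 0 < t := fun t ht => lt_of_lt_of_le hx ht
  refine monotoneOn_of_deriv_nonneg (convex_Ici x)
    (fun t ht => (scaledE_hasDerivAt (hpos t ht)).continuousAt.continuousWithinAt)
    (fun t ht => (scaledE_hasDerivAt (hpos t
      (interior_subset ht))).differentiableAt.differentiableWithinAt) ?_
    Set.self_mem_Ici hxy hxy
  intro t ht
  have h0 := hpos t (interior_subset ht)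
  rw [(scaledE_hasDerivAt h0).deriv]
  have h1 := mul_le_mul_of_nonneg_right (le_scaledE h0) (show 0 ≤ 1 + 1 / t by positivity)
  have h2 : t / (t + 1) * (1 + 1 / t) = 1 := by field_simp
  linarith

/-- `p' = p (1 + 1/x) - 1 ≤ 1/x ≤ 1/5` on `[5, ∞)`. -/
lemma scaledE_sub_le {x y : ℝ} (hx : 5 ≤ x) (hxy : x ≤ y) :
    scaledE y - scaledE x ≤ (y - x) / 5 := by
  have hpos : ∀ t ∈ Set.Ici (5:ℝ), 0 < t := fun t ht => lt_of_lt_of_le (by norm_num) ht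
  have := (convex_Ici (5:ℝ)).image_sub_le_mul_sub_of_deriv_le
    (fun t ht => (scaledE_hasDerivAt (hpos t ht)).continuousAt.continuousWithinAt)
    (fun t ht => (scaledE_hasDerivAt (hpos t
      (interior_subset ht))).differentiableAt.differentiableWithinAt) (C := 1 / 5) ?_
    x hx y (hx.trans hxy) hxy
  · linarith
  intro t ht
  have ht5 : (5:ℝ) ≤ t := interior_subset (s := Set.Ici (5:ℝ)) ht
  have h0 : 0 < t := by linarith
  rw [(scaledE_hasDerivAt h0).deriv]
  have h1 := mul_le_mul_of_nonneg_right (scaledE_le_one h0) (show 0 ≤ 1 + 1 / t by positivity)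
  have h2 : 1 / t ≤ 1 / 5 := by gcongr
  linarith

/-! ### `g₃` and its derivative at `r = 5/2` -/

/-- The difference quotient `q σ = (p (5 + 5σ) - p 5) / σ`. -/
noncomputable def scaledQ (σ : ℝ) : ℝ := (scaledE (5 + 5 * σ) - scaledE 5) / σ

lemma g3_value {σ : ℝ} (hσ : 0 < σ) :
    g3 σ (5 / 2) = 2 / 5 * Real.exp (-(5 / 2 * σ)) *
      (1 - a1 * Real.exp (-5) * scaledQ σ / 5) := by
  have e1 : (2 : ℝ) * (5 / 2) = 5 := by norm_num
  have e2 : 2 * (1 + σ) * (5 / 2) = 5 + 5 * σ := by ring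
  have e3 : Real.exp (-(5 + 5 * σ)) = Real.exp (-5) * Real.exp (-(5 * σ)) := by
    rw [← Real.exp_add]; ring_nf
  have e4 : Real.exp (2 * σ * (5 / 2)) = (Real.exp (-(5 * σ)))⁻¹ := by
    rw [← Real.exp_neg]; ring_nf
  have e5 : -σ * (5 / 2) = -(5 / 2 * σ) := by ring
  have h5 : (5 : ℝ) + 5 * σ ≠ 0 := by positivity
  have h6 : (1 : ℝ) + σ ≠ 0 := by positivity
  have hE := Real.exp_ne_zero (-(5 * σ))
  rw [g3, e1, e2, expInt_eq (by norm_num : (0:ℝ) < 5), expInt_eq (by positivity : 0 < 5 + 5 * σ),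
    e3, e4, e5, scaledQ, show 5 + 5 * σ = 5 * (1 + σ) by ring]
  field_simp
  ring

lemma g3_hasDerivAt {σ : ℝ} (hσ : 0 < σ) :
    HasDerivAt (g3 σ) (-(4 / 25 * Real.exp (-(5 / 2 * σ)) *
      (1 + 5 / 2 * σ - a1 * Real.exp (-5) *
        (1 - (scaledE 5 + scaledE (5 + 5 * σ)) / 2 + scaledQ σ / 5)))) (5 / 2) := by
  have e1 : (2 : ℝ) * (5 / 2) = 5 := by norm_num
  have e2 : 2 * (1 + σ) * (5 / 2) = 5 + 5 * σ := by ring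
  have e3 : Real.exp (-(5 + 5 * σ)) = Real.exp (-5) * Real.exp (-(5 * σ)) := by
    rw [← Real.exp_add]; ring_nf
  have e4 : Real.exp (2 * σ * (5 / 2)) = (Real.exp (-(5 * σ)))⁻¹ := by
    rw [← Real.exp_neg]; ring_nf
  have e5 : -σ * (5 / 2) = -(5 / 2 * σ) := by ring
  have h5 : (0 : ℝ) < 5 + 5 * σ := by positivity
  have h6 : (1 : ℝ) + σ ≠ 0 := by positivity
  have hE := Real.exp_ne_zero (-(5 * σ))
  have lin : ∀ c : ℝ, HasDerivAt (fun r : ℝ => c * r) c (5 / 2) := fun c => by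
    simpa using (hasDerivAt_id (5 / 2 : ℝ)).const_mul c
  have d1 : HasDerivAt (fun r : ℝ => expInt (2 * r)) (-(Real.exp (-5) / 5) * 2) (5 / 2) := by
    have h := expInt_hasDerivAt (show (0:ℝ) < 2 * (5 / 2) by norm_num)
    have := h.comp (5 / 2 : ℝ) (lin 2)
    rwa [e1] at this
  have d2 : HasDerivAt (fun r : ℝ => expInt (2 * (1 + σ) * r))
      (-(Real.exp (-(5 + 5 * σ)) / (5 + 5 * σ)) * (2 * (1 + σ))) (5 / 2) := by
    have h := expInt_hasDerivAt (show (0:ℝ) < 2 * (1 + σ) * (5 / 2) by rw [e2]; exact h5)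
    have := h.comp (5 / 2 : ℝ) (lin (2 * (1 + σ)))
    rwa [e2] at this
  have d3 := ((lin σ).inv (by positivity)).mul (lin (-σ)).exp
  have d4 := ((d1.const_mul a1).const_add σ).sub
    ((((lin (2 * σ)).exp.const_mul a1).mul_const (1 + σ)).mul d2)
  have d5 := d3.mul d4
  refine (d5.congr_deriv ?_)
  simp only [Pi.mul_apply, Pi.inv_apply, Pi.sub_apply]
  rw [e1, e2, expInt_eq (by norm_num : (0:ℝ) < 5), expInt_eq h5,
    e3, e4, e5, scaledQ, show 5 + 5 * σ = 5 * (1 + σ) by ring]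
  field_simp
  ring

lemma g30_eq (r : ℝ) : g30 r = g3 1 r := by
  rw [g30, g3, gfun, show 2 * (1 + 1) * r = 4 * r by ring, show (2:ℝ) * 1 * r = r + r by ring,
    Real.exp_add, show -1 * r = -r by ring, one_mul, Real.exp_neg]
  have := Real.exp_ne_zero r
  field_simp
  ring

/-! ### Numerical estimates -/

lemma eps_le : a1 * Real.exp (-5) ≤ 1 / 20 := by
  have h1 : (2.718 : ℝ) ^ 5 ≤ Real.exp 5 := by
    rw [show (5:ℝ) = ((5:ℕ):ℝ) * 1 by norm_num, Real.exp_nat_mul]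
    gcongr
    linarith [Real.exp_one_gt_d9]
  have h2 : a1 ≤ 7.36 := by rw [a1]; norm_num
  rw [Real.exp_neg, ← div_eq_mul_inv, div_le_iff₀ (Real.exp_pos 5)]
  norm_num at h1 h2 ⊢
  linarith

lemma exp_neg_five_halves_ge : 1 / 21 ≤ Real.exp (-(5 / 2)) := by
  have h1 : Real.exp (5 / 2) ≤ 21 := by
    calc Real.exp (5 / 2) ≤ Real.exp (((3:ℕ):ℝ) * 1) := Real.exp_le_exp.2 (by norm_num)
      _ = Real.exp 1 ^ 3 := Real.exp_nat_mul 1 3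
      _ ≤ 2.72 ^ 3 := by gcongr; linarith [Real.exp_one_lt_d9]
      _ ≤ 21 := by norm_num
  rw [Real.exp_neg, ← one_div]
  exact one_div_le_one_div_of_le (Real.exp_pos _) h1

lemma exp_neg_five_fourths_le : Real.exp (-(5 / 4)) ≤ 3 / 10 := by
  have h1 : 10 / 3 ≤ Real.exp (5 / 4) := by
    rw [show (5 / 4 : ℝ) = 1 + 1 / 4 by norm_num, Real.exp_add]
    nlinarith [Real.exp_one_gt_d9, Real.add_one_le_exp (1 / 4 : ℝ)]
  rw [Real.exp_neg, inv_le_comm₀ (Real.exp_pos _) (by norm_num)]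
  linarith

/-- The chord of the convex function `s ↦ e^{-5s/2}` over `[0, 1]`. -/
lemma exp_chord {σ : ℝ} (h0 : 0 ≤ σ) (h1 : σ ≤ 1) :
    Real.exp (-(5 / 2 * σ)) ≤ (1 - σ) + σ * Real.exp (-(5 / 2)) := by
  have := convexOn_exp.2 (Set.mem_univ 0) (Set.mem_univ (-(5 / 2))) (sub_nonneg.2 h1) h0
    (by ring)
  simp only [smul_eq_mul, mul_zero, zero_add, Real.exp_zero, mul_one] at this
  rwa [show σ * -(5 / 2) = -(5 / 2 * σ) by ring] at this

/-- The main term of the derivative: `(1 + x) e^{-x} - (7/2) e^{-5/2}` with `x = 5σ/2`. Near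
`σ = 1` it is compared with `1 - σ`; for `σ ≤ 1/2` the bound `(1 + x) e^{-x} ≤ 1` suffices. -/
lemma w2m_deriv_arith {σ : ℝ} (h0 : 0 < σ) (h1 : σ < 1) :
    0 ≤ (1 + 5 / 2 * σ) * Real.exp (-(5 / 2 * σ)) - 7 / 2 * Real.exp (-(5 / 2)) ∧
    (1 + 5 / 2 * σ) * Real.exp (-(5 / 2 * σ)) - 7 / 2 * Real.exp (-(5 / 2)) ≤
      9 / 8 * (1 - σ ^ 2) := by
  have hz := exp_neg_five_halves_ge
  have hw := exp_neg_five_fourths_le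
  set y := Real.exp (-(5 / 2 * σ)) with hy
  set z := Real.exp (-(5 / 2)) with hzdef
  have hypos : 0 < y := Real.exp_pos _
  have hzpos : 0 < z := Real.exp_pos _
  constructor
  · have h2 : y = z * Real.exp (5 / 2 - 5 / 2 * σ) := by
      rw [hy, hzdef, ← Real.exp_add]; ring_nf
    have h3 := Real.add_one_le_exp (5 / 2 - 5 / 2 * σ)
    have h4 : z * (7 / 2 - 5 / 2 * σ) ≤ y := by
      rw [h2]; exact mul_le_mul_of_nonneg_left (by linarith) hzpos.le
    have h5 := mul_le_mul_of_nonneg_left h4 (show 0 ≤ 1 + 5 / 2 * σ by linarith)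
    nlinarith [mul_pos (mul_pos h0 (sub_pos.2 h1)) hzpos]
  · rcases le_total σ (1 / 2) with h | h
    · have h2 : (1 + 5 / 2 * σ) * y ≤ 1 := by
        have h3 := Real.add_one_le_exp (5 / 2 * σ)
        have h4 : Real.exp (5 / 2 * σ) * y = 1 := by
          rw [hy, ← Real.exp_add]; simp
        nlinarith
      nlinarith
    · -- `y ≤ e^{-5/4} / (1 + (x - 5/4))`, and `1 + x ≤ (9/4) (x - 1/4)` for `x ≥ 5/4`
      have h2 : y * (5 / 2 * σ - 1 / 4) ≤ Real.exp (-(5 / 4)) := by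
        have h3 := Real.add_one_le_exp (5 / 2 * σ - 5 / 4)
        have h4 : y * Real.exp (5 / 2 * σ - 5 / 4) = Real.exp (-(5 / 4)) := by
          rw [hy, ← Real.exp_add]; ring_nf
        rw [← h4]
        exact mul_le_mul_of_nonneg_left (by linarith) hypos.le
      have h5 : y * (1 + 5 / 2 * σ) ≤ 27 / 40 := by
        nlinarith [mul_nonneg hypos.le (sub_nonneg.2 h)]
      have h6 : y * (1 - 5 / 2 * (1 - σ)) ≤ z := by
        have h3 := Real.add_one_le_exp (-(5 / 2 * (1 - σ)))
        have h4 : y * Real.exp (-(5 / 2 * (1 - σ))) = z := by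
          rw [hy, hzdef, ← Real.exp_add]; ring_nf
        rw [← h4]
        exact mul_le_mul_of_nonneg_left (by linarith) hypos.le
      have h7 := mul_le_mul_of_nonneg_left h6 (show 0 ≤ 1 + 5 / 2 * σ by linarith)
      have h8 := mul_le_mul_of_nonneg_left h5 (show 0 ≤ 5 / 2 * (1 - σ) by linarith)
      nlinarith [mul_pos (sub_pos.2 h1) hzpos, mul_nonneg (sub_pos.2 h1).le (sub_nonneg.2 h)]

/-! ### The bounds on `w₂⁻` -/

/-- For every `λ ∈ (0,1)`, i.e. every `σ = √(1-λ) ∈ (0,1)`: `|w₂⁻(5/2)| < 1/2` and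
`|(w₂⁻)'(5/2)| < 1/5`. -/
theorem w2m_value_bounds
    (lam : ℝ) (hlam : lam ∈ Set.Ioo (0:ℝ) 1)
    (σ : ℝ) (hσ : σ = Real.sqrt (1 - lam)) :
    |w2m lam (5/2)| < 1 / 2 ∧ |deriv (w2m lam) (5/2)| < 1 / 5 := by
  obtain ⟨hl0, hl1⟩ := hlam
  have hs0 : 0 < σ := by rw [hσ]; exact Real.sqrt_pos.2 (by linarith)
  have hsq : σ ^ 2 = 1 - lam := by rw [hσ]; exact Real.sq_sqrt (by linarith)
  have hs1 : σ < 1 := by nlinarith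
  have hlam : lam = 1 - σ ^ 2 := by linarith
  have hw : w2m lam = fun r => lam⁻¹ * (g3 σ r - g3 1 r) := by
    funext r; rw [w2m, ← hσ, g30_eq]
  have hd := ((g3_hasDerivAt hs0).sub (g3_hasDerivAt one_pos)).const_mul lam⁻¹
  rw [hw]
  rw [show deriv (fun r => lam⁻¹ * (g3 σ r - g3 1 r)) (5 / 2) = _ from hd.deriv]
  beta_reduce
  rw [g3_value hs0, g3_value one_pos]
  obtain ⟨hm0, hm1⟩ := w2m_deriv_arith hs0 hs1
  have hch := exp_chord hs0.le hs1.le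
  have hyz : Real.exp (-(5 / 2)) ≤ Real.exp (-(5 / 2 * σ)) :=
    Real.exp_le_exp.2 (by linarith)
  have hz1 : Real.exp (-(5 / 2)) ≤ 1 := Real.exp_le_one_iff.2 (by norm_num)
  have hzpos : 0 < Real.exp (-(5 / 2)) := Real.exp_pos _
  have he := eps_le
  have he0 : 0 ≤ a1 * Real.exp (-5) := by
    have : 0 ≤ a1 := by rw [a1]; positivity
    positivity
  have hp5 : 5 / 6 ≤ scaledE 5 := by
    have := le_scaledE (show (0:ℝ) < 5 by norm_num)
    norm_num at this
    exact this
  have a_lo := scaledE_mono (show (0:ℝ) < 5 by norm_num) (show 5 ≤ 5 + 5 * σ by linarith)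
  have b_lo := scaledE_mono (show 0 < 5 + 5 * σ by linarith)
    (show 5 + 5 * σ ≤ 5 + 5 * 1 by linarith)
  have a_hi := scaledE_sub_le (le_refl (5:ℝ)) (show 5 ≤ 5 + 5 * σ by linarith)
  have b_hi := scaledE_sub_le (show 5 ≤ 5 + 5 * σ by linarith)
    (show 5 + 5 * σ ≤ 5 + 5 * 1 by linarith)
  have c_hi := scaledE_le_one (show (0:ℝ) < 5 + 5 * 1 by norm_num)
  have hq : scaledQ σ * σ = scaledE (5 + 5 * σ) - scaledE 5 := by
    rw [scaledQ]; field_simp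
  have hq1 : scaledQ 1 = scaledE (5 + 5 * 1) - scaledE 5 := by rw [scaledQ, div_one]
  rw [show (5 / 2 * (1:ℝ)) = 5 / 2 by norm_num]
  generalize Real.exp (-(5 / 2 * σ)) = y at *
  generalize Real.exp (-(5 / 2)) = z at *
  generalize a1 * Real.exp (-5) = ε at *
  generalize scaledE (5 + 5 * σ) = p1 at *
  generalize scaledE (5 + 5 * 1) = p2 at *
  generalize scaledE 5 = p at *
  generalize scaledQ σ = q at *
  generalize scaledQ 1 = q1 at *
  clear hd hw hσ
  have hq_lo : 0 ≤ q := by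
    by_contra hneg
    push Not at hneg
    nlinarith
  have hq_hi : q ≤ 1 := le_of_mul_le_mul_right (by linarith) hs0
  have ht : 0 < 1 - σ := by linarith
  -- `q σ - q 1 = (1 - σ) q σ - (p 10 - p (5 + 5σ))`
  have hdq : q - q1 = (1 - σ) * q - (p2 - p1) := by rw [hq1]; linarith
  have hdq_hi : q - q1 ≤ 1 - σ := by nlinarith
  have hdq_lo : -(1 - σ) ≤ q - q1 := by nlinarith
  have htl : 1 - σ ≤ lam := by rw [hlam]; nlinarith
  have hyz1 : y - z ≤ 1 - σ := by nlinarith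
  have hyz0 : 0 ≤ y - z := by linarith
  have key : ∀ A c : ℝ, |A| < c * lam → |lam⁻¹ * A| < c := by
    intro A c h
    rw [abs_mul, abs_of_pos (inv_pos.2 hl0), inv_mul_lt_iff₀ hl0]
    linarith
  have small : ∀ u K : ℝ, 0 ≤ K → |u| ≤ K * (1 - σ) → |ε * u| ≤ K / 20 * (1 - σ) := by
    intro u K hK hu
    rw [abs_mul, abs_of_nonneg he0]
    calc ε * |u| ≤ 1 / 20 * (K * (1 - σ)) := by gcongr
      _ = _ := by ring
  have zsmall : ∀ u K : ℝ, 0 ≤ K → |u| ≤ K * (1 - σ) → |z * u| ≤ K * (1 - σ) := by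
    intro u K hK hu
    rw [abs_mul, abs_of_pos hzpos]
    calc z * |u| ≤ 1 * (K * (1 - σ)) := by gcongr
      _ = _ := by ring
  have ysmall : ∀ u : ℝ, ∀ K : ℝ, 0 ≤ K → |u| ≤ K → |(y - z) * u| ≤ K * (1 - σ) := by
    intro u K hK hu
    rw [abs_mul, abs_of_nonneg hyz0]
    calc (y - z) * |u| ≤ (1 - σ) * K := by gcongr
      _ = _ := by ring
  constructor
  · apply key
    have s1 := ysmall q 1 (by norm_num) (abs_le.2 ⟨by linarith, hq_hi⟩)
    have s2 := zsmall (q - q1) 1 (by norm_num) (abs_le.2 ⟨by linarith, by linarith⟩)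
    have s3 := small ((y - z) * q + z * (q - q1)) 2 (by norm_num)
      ((abs_add_le _ _).trans (by linarith))
    rw [show 2 / 5 * y * (1 - ε * q / 5) - 2 / 5 * z * (1 - ε * q1 / 5) =
      2 / 5 * (y - z) - 2 / 25 * (ε * ((y - z) * q + z * (q - q1))) by ring]
    rw [abs_le] at s3
    rw [abs_lt]
    constructor <;> linarith
  · apply key
    have s1 := ysmall (1 - (p + p1) / 2 + q / 5) 1 (by norm_num)
      (abs_le.2 ⟨by linarith, by linarith⟩)
    have s2 := zsmall ((p2 - p1) / 2 + (q - q1) / 5) 1 (by norm_num)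
      (abs_le.2 ⟨by linarith, by linarith⟩)
    have s3 := small ((y - z) * (1 - (p + p1) / 2 + q / 5) + z * ((p2 - p1) / 2 + (q - q1) / 5)) 2
      (by norm_num) ((abs_add_le _ _).trans (by linarith))
    rw [show -(4 / 25 * y * (1 + 5 / 2 * σ - ε * (1 - (p + p1) / 2 + q / 5))) -
        -(4 / 25 * z * (1 + 5 / 2 - ε * (1 - (p + p2) / 2 + q1 / 5))) =
      -(4 / 25 * ((1 + 5 / 2 * σ) * y - 7 / 2 * z)) +
        4 / 25 * (ε * ((y - z) * (1 - (p + p1) / 2 + q / 5) +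
          z * ((p2 - p1) / 2 + (q - q1) / 5))) by ring]
    rw [abs_le] at s3
    rw [← hlam] at hm1
    rw [abs_lt]
    constructor <;> linarith
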